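/- There exists an entire function F : ℂ → ℂ such that F(s) = (1/2)·s·(s−1)·π^{−s/2}·Γ(s/2)·ζ(s) for every s with Re(s) > 0 and s ≠ 1, and such that F(s) = F(1−s) for all s ∈ ℂ. -/

import Mathlib

/-!
The completed zeta function `Λ(s) = π^(-s/2) Γ(s/2) ζ(s)` is `Λ₀(s) - 1/s - 1/(1-s)` with `Λ₀`
entire and invariant under `s ↦ 1 - s`. Since `s (s-1) (-1/s - 1/(1-s)) = 1`, the product
`(1/2) s (s-1) Λ(s)` extends to the entire function `(1/2) (s (s-1) Λ₀(s) + 1)`.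
-/

open Complex

/-- Riemann's function `ξ(s) = (1/2) s (s-1) π^(-s/2) Γ(s/2) ζ(s)`, written in terms of the entire
part `Λ₀` of the completed zeta function so that it has the right values at the poles `0` and `1`
of `Λ` and at the poles `0, -2, -4, …` of `Γ(s/2)`. -/
noncomputable def riemannXi (s : ℂ) : ℂ :=
  (1 / 2) * (s * (s - 1) * completedRiemannZeta₀ s + 1)

theorem differentiable_riemannXi : Differentiable ℂ riemannXi := by
  have hΛ₀ := differentiable_completedZeta₀
  unfold riemannXi
  fun_prop

theorem riemannXi_one_sub (s : ℂ) : riemannXi (1 - s) = riemannXi s := by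
  simp only [riemannXi, completedRiemannZeta₀_one_sub]
  ring

theorem riemannXi_eq_mul_completedRiemannZeta {s : ℂ} (h0 : s ≠ 0) (h1 : s ≠ 1) :
    riemannXi s = (1 / 2) * s * (s - 1) * completedRiemannZeta s := by
  have h1' : 1 - s ≠ 0 := sub_ne_zero.mpr h1.symm
  rw [riemannXi, completedRiemannZeta_eq]
  field_simp
  ring

theorem Gammaℝ_mul_riemannZeta {s : ℂ} (hΓ : Gammaℝ s ≠ 0) :
    Gammaℝ s * riemannZeta s = completedRiemannZeta s := by
  have h0 : s ≠ 0 := by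
    rintro rfl
    exact hΓ (Gammaℝ_eq_zero_iff.mpr ⟨0, by simp⟩)
  rw [riemannZeta_def_of_ne_zero h0, mul_div_cancel₀ _ hΓ]

/-- The points `s = -2n` are the poles of `Γ(s/2)`, where Mathlib's `Gamma` takes the value `0`. -/
theorem riemannXi_eq_mul_riemannZeta {s : ℂ} (hs : ∀ n : ℕ, s ≠ -(2 * n)) (h1 : s ≠ 1) :
    riemannXi s = (1 / 2) * s * (s - 1) * (Real.pi : ℂ) ^ (-s / 2) * Gamma (s / 2) *
      riemannZeta s := by
  have h0 : s ≠ 0 := by simpa using hs 0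
  have hΓ : Gammaℝ s ≠ 0 := by simpa [Gammaℝ_eq_zero_iff] using hs
  rw [riemannXi_eq_mul_completedRiemannZeta h0 h1, ← Gammaℝ_mul_riemannZeta hΓ, Gammaℝ_def]
  ring

theorem exists_entire_xi_general :
    ∃ F : ℂ → ℂ, Differentiable ℂ F ∧
      (∀ s : ℂ, (∀ n : ℕ, s ≠ -(2 * n)) → s ≠ 1 →
        F s = (1 / 2) * s * (s - 1) * (Real.pi : ℂ) ^ (-s / 2) * Gamma (s / 2) *
          riemannZeta s) ∧
      (∀ s : ℂ, F s = F (1 - s)) :=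
  ⟨riemannXi, differentiable_riemannXi, fun _ ↦ riemannXi_eq_mul_riemannZeta,
    fun s ↦ (riemannXi_one_sub s).symm⟩

/-- There is an entire function agreeing with
`(1/2) s (s-1) π^(-s/2) Γ(s/2) ζ(s)` on `{Re(s) > 0, s ≠ 1}` and satisfying
`F(s) = F(1-s)` everywhere. -/
theorem exists_entire_xi :
    ∃ F : ℂ → ℂ, Differentiable ℂ F ∧
      (∀ s : ℂ, 0 < s.re → s ≠ 1 →
        F s = (1 / 2) * s * (s - 1) * (Real.pi : ℂ) ^ (-s / 2) * Complex.Gamma (s / 2) *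
          riemannZeta s) ∧
      (∀ s : ℂ, F s = F (1 - s)) := by
  obtain ⟨F, hF, hF_eq, hF_symm⟩ := exists_entire_xi_general
  refine ⟨F, hF, fun s hs ↦ hF_eq s fun n hn ↦ ?_, hF_symm⟩
  exact Gammaℝ_ne_zero_of_re_pos hs (Gammaℝ_eq_zero_iff.mpr ⟨n, hn⟩)
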